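/- For every n ≥ 2 and every vector of entitlements b_1,…,b_n > 0 with ∑_{i=1}^n b_i = 1, the unit upper bounds satisfy ∑_{i=1}^n b̂_i ≤ s_n, where s_n = ∑_{i=1}^n 1/a_i and (a_i) is defined by a_1 = 1 and a_{k+1} = a_k(a_k + 1). -/

import Mathlib

/-!
Put `k i = ⌊1 / b i⌋`. Then `1 / (k i + 1) < b i`, so `∑ 1 / (k i + 1) < 1`, while the quantity to be
bounded is `∑ 1 / k i`. After sorting, `k` is monotone.

The numbers `aseq i + 1 = 2, 3, 7, 43, …` form Sylvester's sequence. The key fact (`curtiss`) is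
that Sylvester's sequence gives the best approximation of `1` from below by sums of `j` unit
fractions, so every prefix sum of `1 / (k i + 1)` is at most that of `1 / (aseq i + 1)`. Its proof
is by strong induction on `j`: a sum of unit fractions below `1` misses `1` by at least the
reciprocal of the product of the denominators, with equality for Sylvester's sequence; hence a
counterexample would have the larger product of denominators, and this contradicts the
inequalities for shorter prefixes by `t + 1 ≤ exp t` and summation by parts.

The theorem then follows from weak majorization: `1 / k = f (1 / (k + 1))` for the convex increasing
function `f x = x / (1 - x)`. Bounding `f` below by its tangent lines at the points `1 / (k i + 1)`,
whose slopes decrease with `i`, and summing by parts gives the claim (`sum_inv_le`).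
-/

open Finset

noncomputable section

/-- The sequence a_1 = 1, a_{k+1} = a_k(a_k + 1) (0-indexed: `aseq 0 = 1`). -/
def aseq : ℕ → ℕ
  | 0 => 1
  | k + 1 => aseq k * (aseq k + 1)

/-- Summation by parts, as an inequality: the weights `c` increase, and the partial sums of `d`,
except perhaps the last, are nonnegative. -/
lemma sum_mul_le_of_monotone (c d : ℕ → ℝ) (hc : Monotone c) (n : ℕ)
    (hd : ∀ j ≤ n, 0 ≤ ∑ i ∈ range j, d i) :
    ∑ i ∈ range (n + 1), c i * d i ≤ c n * ∑ i ∈ range (n + 1), d i := by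
  induction n with
  | zero => simp
  | succ n ih =>
    have h1 := ih (fun j hj => hd j (by omega))
    have h2 := hd (n + 1) le_rfl
    have h3 := hc (Nat.le_succ n)
    rw [sum_range_succ _ (n + 1), sum_range_succ d (n + 1)]
    simp only [Nat.succ_eq_add_one] at h3
    nlinarith [mul_le_mul_of_nonneg_right h3 h2]

lemma aseq_pos (n : ℕ) : 0 < aseq n := by
  induction n with
  | zero => simp [aseq]
  | succ n ih => simp only [aseq]; positivity

lemma prod_aseq (n : ℕ) : ∏ i ∈ range n, ((aseq i : ℝ) + 1) = aseq n := by
  induction n with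
  | zero => simp [aseq]
  | succ n ih => rw [prod_range_succ, ih]; simp [aseq]

lemma sum_aseq (n : ℕ) : ∑ i ∈ range n, 1 / ((aseq i : ℝ) + 1) = 1 - 1 / aseq n := by
  induction n with
  | zero => simp [aseq]
  | succ n ih =>
    have h : (0 : ℝ) < aseq n := by exact_mod_cast aseq_pos n
    rw [sum_range_succ, ih]
    simp only [aseq]
    push_cast
    field_simp
    ring

/-- The product of the denominators is a common denominator. -/
lemma exists_sum_eq (k : ℕ → ℕ) (n : ℕ) :
    ∃ N : ℕ, ∑ i ∈ range n, 1 / ((k i : ℝ) + 1)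
      = N / ((∏ i ∈ range n, (k i + 1) : ℕ) : ℝ) := by
  induction n with
  | zero => exact ⟨0, by simp⟩
  | succ n ih =>
    obtain ⟨N, hN⟩ := ih
    refine ⟨N * (k n + 1) + ∏ i ∈ range n, (k i + 1), ?_⟩
    have hP : 0 < ∏ i ∈ range n, (k i + 1) := prod_pos (fun i _ => by omega)
    rw [sum_range_succ, hN, prod_range_succ]
    have hP' : (0 : ℝ) < ((∏ i ∈ range n, (k i + 1) : ℕ) : ℝ) := by exact_mod_cast hP
    generalize ∏ i ∈ range n, (k i + 1) = P at hP'
    push_cast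
    field_simp

lemma one_div_prod_le (k : ℕ → ℕ) (n : ℕ) (h : ∑ i ∈ range n, 1 / ((k i : ℝ) + 1) < 1) :
    1 / (∏ i ∈ range n, ((k i : ℝ) + 1)) ≤ 1 - ∑ i ∈ range n, 1 / ((k i : ℝ) + 1) := by
  obtain ⟨N, hN⟩ := exists_sum_eq k n
  have hP : 0 < ∏ i ∈ range n, (k i + 1) := prod_pos (fun i _ => by omega)
  have hcast : (∏ i ∈ range n, ((k i : ℝ) + 1)) = ((∏ i ∈ range n, (k i + 1) : ℕ) : ℝ) := by
    push_cast; rfl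
  rw [hcast]
  rw [hN] at h ⊢
  have hP' : (0 : ℝ) < ((∏ i ∈ range n, (k i + 1) : ℕ) : ℝ) := by exact_mod_cast hP
  generalize ∏ i ∈ range n, (k i + 1) = P at *
  rw [div_lt_one hP'] at h
  have h2 : N + 1 ≤ P := by exact_mod_cast h
  have h3 : (N : ℝ) + 1 ≤ P := by exact_mod_cast h2
  rw [le_sub_iff_add_le, ← add_div, div_le_one hP']
  linarith

/-- Among sums of `n` unit fractions that are less than `1`, the one with Sylvester's
denominators `2, 3, 7, 43, …` is the largest. -/
lemma curtiss (k : ℕ → ℕ) (hk : Monotone k) (n : ℕ)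
    (h : ∑ i ∈ range n, 1 / ((k i : ℝ) + 1) < 1) :
    ∑ i ∈ range n, 1 / ((k i : ℝ) + 1) ≤ ∑ i ∈ range n, 1 / ((aseq i : ℝ) + 1) := by
  induction n using Nat.strong_induction_on with
  | _ n ih =>
  rcases n with _ | n
  · simp
  by_contra! hlt
  have hpre : ∀ j ≤ n, 0 ≤ ∑ i ∈ range j, (1 / ((aseq i : ℝ) + 1) - 1 / ((k i : ℝ) + 1)) := by
    intro j hj
    rw [sum_sub_distrib, sub_nonneg]
    refine ih j (by omega) (lt_of_le_of_lt ?_ h)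
    exact sum_le_sum_of_subset_of_nonneg (range_mono (by omega)) (fun i _ _ => by positivity)
  have habel := sum_mul_le_of_monotone (fun i => (k i : ℝ) + 1)
    (fun i => 1 / ((aseq i : ℝ) + 1) - 1 / ((k i : ℝ) + 1))
    (fun i j hij => by
      have : (k i : ℝ) ≤ k j := by exact_mod_cast hk hij
      simpa using this) n hpre
  have hneg : ((k n : ℝ) + 1) * ∑ i ∈ range (n + 1),
      (1 / ((aseq i : ℝ) + 1) - 1 / ((k i : ℝ) + 1)) < 0 := by
    apply mul_neg_of_pos_of_neg (by positivity)
    rw [sum_sub_distrib]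
    linarith
  -- The product of the ratios of denominators is at most `exp` of a negative number.
  have hprod : ∏ i ∈ range (n + 1), (((k i : ℝ) + 1) / ((aseq i : ℝ) + 1)) < 1 := by
    calc ∏ i ∈ range (n + 1), (((k i : ℝ) + 1) / ((aseq i : ℝ) + 1))
        ≤ ∏ i ∈ range (n + 1), Real.exp (((k i : ℝ) + 1) *
            (1 / ((aseq i : ℝ) + 1) - 1 / ((k i : ℝ) + 1))) := by
          refine prod_le_prod (fun i _ => by positivity) (fun i _ => ?_)
          refine le_trans (le_of_eq ?_) (Real.add_one_le_exp _)
          field_simp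
          ring
      _ = Real.exp (∑ i ∈ range (n + 1), ((k i : ℝ) + 1) *
            (1 / ((aseq i : ℝ) + 1) - 1 / ((k i : ℝ) + 1))) := (Real.exp_sum _ _).symm
      _ < 1 := by
          rw [Real.exp_lt_one_iff]
          exact lt_of_le_of_lt habel hneg
  have ha : (0 : ℝ) < aseq (n + 1) := by exact_mod_cast aseq_pos (n + 1)
  have hP : 0 < ∏ i ∈ range (n + 1), ((k i : ℝ) + 1) := prod_pos (fun i _ => by positivity)
  rw [prod_div_distrib, prod_aseq, div_lt_one ha] at hprod
  have h1 := one_div_prod_le k (n + 1) h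
  rw [sum_aseq] at hlt
  have h2 := one_div_lt_one_div_of_lt hP hprod
  linarith

/-- The tangent-line inequality for `x / (1 - x)` at `x = 1 / (k + 1)`, evaluated at
`1 / (a + 1)`. -/
lemma tangent_le (a k : ℝ) (ha : 0 < a) (hk : 0 < k) :
    (1 + 1 / k) ^ 2 * (1 / (a + 1) - 1 / (k + 1)) ≤ 1 / a - 1 / k := by
  have h : 1 / a - 1 / k - (1 + 1 / k) ^ 2 * (1 / (a + 1) - 1 / (k + 1))
      = (k - a) ^ 2 / (k ^ 2 * a * (a + 1)) := by
    field_simp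
    ring
  have h2 : 0 ≤ (k - a) ^ 2 / (k ^ 2 * a * (a + 1)) := by positivity
  linarith

lemma sum_inv_le (k : ℕ → ℕ) (hk : Monotone k) (hpos : ∀ i, 0 < k i) (n : ℕ)
    (h : ∑ i ∈ range (n + 1), 1 / ((k i : ℝ) + 1) < 1) :
    ∑ i ∈ range (n + 1), 1 / (k i : ℝ) ≤ ∑ i ∈ range (n + 1), 1 / (aseq i : ℝ) := by
  have hpre : ∀ j ≤ n + 1,
      0 ≤ ∑ i ∈ range j, (1 / ((aseq i : ℝ) + 1) - 1 / ((k i : ℝ) + 1)) := by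
    intro j hj
    rw [sum_sub_distrib, sub_nonneg]
    refine curtiss k hk j (lt_of_le_of_lt ?_ h)
    exact sum_le_sum_of_subset_of_nonneg (range_mono (by omega)) (fun i _ _ => by positivity)
  have habel := sum_mul_le_of_monotone (fun i => -(1 + 1 / (k i : ℝ)) ^ 2)
    (fun i => 1 / ((aseq i : ℝ) + 1) - 1 / ((k i : ℝ) + 1))
    (fun i j hij => by
      have h1 : (k i : ℝ) ≤ k j := by exact_mod_cast hk hij
      have h2 : (0 : ℝ) < k i := by exact_mod_cast hpos i
      have h3 := one_div_le_one_div_of_le h2 h1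
      have h4 : 0 ≤ 1 + 1 / (k j : ℝ) := by positivity
      exact neg_le_neg (pow_le_pow_left₀ h4 (by linarith) 2)) n (fun j hj => hpre j (by omega))
  have h0 : 0 ≤ (1 + 1 / (k n : ℝ)) ^ 2 * ∑ i ∈ range (n + 1),
      (1 / ((aseq i : ℝ) + 1) - 1 / ((k i : ℝ) + 1)) :=
    mul_nonneg (by positivity) (hpre (n + 1) le_rfl)
  have ht : ∑ i ∈ range (n + 1), (1 + 1 / (k i : ℝ)) ^ 2 *
      (1 / ((aseq i : ℝ) + 1) - 1 / ((k i : ℝ) + 1))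
      ≤ ∑ i ∈ range (n + 1), (1 / (aseq i : ℝ) - 1 / (k i : ℝ)) :=
    sum_le_sum (fun i _ => tangent_le _ _ (by exact_mod_cast aseq_pos i)
      (by exact_mod_cast hpos i))
  simp only [neg_mul, sum_neg_distrib] at habel
  rw [sum_sub_distrib] at ht
  linarith

/-- for n ≥ 2 and entitlements b_1,…,b_n > 0 summing to 1, the unit
upper bounds b̂_i = 1/⌊1/b_i⌋ satisfy ∑ b̂_i ≤ s_n = ∑_{i=1}^n 1/a_i. -/
theorem sum_unit_upper_bounds_le (n : ℕ) (hn : 2 ≤ n) (b : Fin n → ℝ)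
    (hb : ∀ i, 0 < b i) (hsum : ∑ i, b i = 1) :
    ∑ i, ((⌊1 / b i⌋₊ : ℝ))⁻¹ ≤ ∑ i : Fin n, (1 : ℝ) / (aseq i.val : ℝ) := by
  obtain ⟨m, rfl⟩ : ∃ m, n = m + 1 := ⟨n - 1, by omega⟩
  have hb1 : ∀ i, b i ≤ 1 := fun i => by
    rw [← hsum]
    exact single_le_sum (fun j _ => (hb j).le) (mem_univ i)
  set q : Fin (m + 1) → ℕ := fun i => ⌊1 / b i⌋₊ with hq
  have hqpos : ∀ i, 0 < q i := fun i =>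
    Nat.floor_pos.mpr (by rw [le_div_iff₀ (hb i)]; linarith [hb1 i])
  have hqlt : ∑ i, 1 / ((q i : ℝ) + 1) < 1 := by
    refine lt_of_lt_of_eq ?_ hsum
    refine sum_lt_sum_of_nonempty univ_nonempty (fun i _ => ?_)
    rw [one_div_lt (by positivity) (hb i)]
    exact Nat.lt_floor_add_one _
  -- Sort `q`, and extend the result to all of `ℕ` by repeating its last value.
  set σ := Tuple.sort q
  let k : ℕ → ℕ := fun i => q (σ ⟨min i m, by omega⟩)
  have hk : Monotone k := fun i j hij =>
    Tuple.monotone_sort q (Fin.mk_le_mk.mpr (min_le_min_right m hij))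
  have hkval : ∀ i : Fin (m + 1), k i = q (σ i) := fun i => by
    have : min (i : ℕ) m = i := min_eq_left (by omega)
    simp only [k, this]
  have key := sum_inv_le k hk (fun i => hqpos _) m (by
    rw [← Fin.sum_univ_eq_sum_range (fun i => 1 / ((k i : ℝ) + 1))]
    simp only [hkval]
    rw [Equiv.sum_comp σ (fun i => 1 / ((q i : ℝ) + 1))]
    exact hqlt)
  rw [← Fin.sum_univ_eq_sum_range (fun i => 1 / (k i : ℝ)),
    ← Fin.sum_univ_eq_sum_range (fun i => 1 / (aseq i : ℝ))] at key
  simp only [hkval] at key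
  rw [Equiv.sum_comp σ (fun i => 1 / (q i : ℝ))] at key
  refine le_trans (le_of_eq (sum_congr rfl fun i _ => ?_)) key
  rw [one_div (q i : ℝ)]
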